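/- Let Z : LC(ℝ) → ℝ be a simple, τ-upper semicontinuous, translation invariant and dually epi-translation invariant valuation that vanishes on indicator functions of closed intervals, let m > 0, q(x) = x²/2, and define ζ : (0,∞) → ℝ by ζ(a) = Z(a·q + I_{[-m,m]})/(2m). Then ζ is non-negative and concave: ζ(λs + (1−λ)r) ≥ λζ(s) + (1−λ)ζ(r) for all 0 ≤ r < s and λ ∈ (0,1). -/

import Mathlib

open MeasureTheory Filter Topology Pointwise Asymptotics

noncomputable section

variable {E : Type*} [NormedAddCommGroup E] [NormedSpace ℝ E]

/-- The effective domain of an extended-real-valued function. -/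
def edom (u : E → EReal) : Set E := {x | u x < ⊤}

/-- `u` has Lipschitz constant `L` on the interior of its domain. -/
def LipBound (u : E → EReal) (L : ℝ) : Prop :=
  ∀ x ∈ interior (edom u), ∀ y ∈ interior (edom u),
    |(u x).toReal - (u y).toReal| ≤ L * ‖x - y‖

/-- Membership in `LC`: proper, lower semicontinuous, convex, compact domain,
Lipschitz on the interior of the domain. -/
def IsLC (u : E → EReal) : Prop :=
  (∀ x y : E, ∀ t : ℝ, 0 < t → t < 1 →
      u (t • x + (1 - t) • y) ≤ (t : EReal) * u x + ((1 - t : ℝ) : EReal) * u y) ∧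
  LowerSemicontinuous u ∧
  (∀ x, u x ≠ ⊥) ∧
  (∃ x, u x ≠ ⊤) ∧
  IsCompact (edom u) ∧
  (∃ L : ℝ, 0 < L ∧ LipBound u L)

/-- τ-convergence: epi-convergence together with uniformly bounded Lipschitz constants. -/
def TauConv (uk : ℕ → E → EReal) (u : E → EReal) : Prop :=
  (∀ k, IsLC (uk k)) ∧ IsLC u ∧
  (∀ (x : E) (xk : ℕ → E), Tendsto xk atTop (𝓝 x) →
      u x ≤ liminf (fun k => uk k (xk k)) atTop) ∧
  (∀ x : E, ∃ xk : ℕ → E, Tendsto xk atTop (𝓝 x) ∧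
      Tendsto (fun k => uk k (xk k)) atTop (𝓝 (u x))) ∧
  (∃ M : ℝ, 0 < M ∧ ∀ k, LipBound (uk k) M)

/-- Valuation property on `LC`. -/
def IsVal (Z : (E → EReal) → ℝ) : Prop :=
  ∀ u v : E → EReal, IsLC u → IsLC v → IsLC (fun x => min (u x) (v x)) →
    Z (fun x => min (u x) (v x)) + Z (fun x => max (u x) (v x)) = Z u + Z v

/-- τ-upper semicontinuity. -/
def TauUSC (Z : (E → EReal) → ℝ) : Prop :=
  ∀ (uk : ℕ → E → EReal) (u : E → EReal), TauConv uk u →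
    limsup (fun k => Z (uk k)) atTop ≤ Z u

/-- τ-continuity. -/
def TauCont (Z : (E → EReal) → ℝ) : Prop :=
  ∀ (uk : ℕ → E → EReal) (u : E → EReal), TauConv uk u →
    Tendsto (fun k => Z (uk k)) atTop (𝓝 (Z u))

/-- Translation invariance. -/
def TransInv (Z : (E → EReal) → ℝ) : Prop :=
  ∀ u : E → EReal, IsLC u → ∀ y : E, Z (fun x => u (x - y)) = Z u

/-- Dual epi-translation invariance. -/
def DualTransInv (Z : (E → EReal) → ℝ) : Prop :=
  ∀ u : E → EReal, IsLC u → ∀ (l : E →ₗ[ℝ] ℝ) (c : ℝ),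
    Z (fun x => u x + ((l x + c : ℝ) : EReal)) = Z u

/-- SL_n invariance. -/
def SLInv (Z : (E → EReal) → ℝ) : Prop :=
  ∀ u : E → EReal, IsLC u → ∀ φ : E →ₗ[ℝ] E, LinearMap.det φ = 1 →
    Z (fun x => u (φ x)) = Z u

/-- The class `Conc`. -/
def IsConc (ζ : ℝ → ℝ) : Prop :=
  (∀ t ∈ Set.Ici (0 : ℝ), 0 ≤ ζ t) ∧ ConcaveOn ℝ (Set.Ici 0) ζ ∧
  Tendsto ζ (𝓝[>] 0) (𝓝 0) ∧
  Tendsto (fun t => ζ t / t) atTop (𝓝 0)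

open Classical in
/-- `(∞-valued) indicator function` of a set. -/
noncomputable def eIndicator (K : Set E) : E → EReal := fun x =>
  if x ∈ K then (0 : EReal) else ⊤

/-- Real part of an extended-real-valued function. -/
def toRealFn (u : E → EReal) : E → ℝ := fun x => (u x).toReal

open Classical in
/-- Second derivative of `u`, set to `0` where `u` is not twice differentiable. -/
noncomputable def secondDeriv (u : ℝ → EReal) : ℝ → ℝ := fun x =>
  if DifferentiableAt ℝ (toRealFn u) x ∧ DifferentiableAt ℝ (deriv (toRealFn u)) x
  then deriv (deriv (toRealFn u)) x
  else 0

/-- The function `ζ(a) = Z(a·q + I_{[-m,m]})/(2m)`, where `q(x) = x²/2`. -/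
noncomputable def zetaOf (Z : (ℝ → EReal) → ℝ) (m : ℝ) : ℝ → ℝ := fun a =>
  Z (fun x => ((a * (x ^ 2 / 2) : ℝ) : EReal) + eIndicator (Set.Icc (-m) m) x) / (2 * m)

/-!
An element of `LC(ℝ)` with domain `[a, b]` is, up to a constant, the primitive of a monotone
function `φ`. If `φ x - α * x` is `1`-periodic, then the graphs of `φ` scaled by `h → 0` converge
to the line `α * x`, so their primitives `τ`-converge to the parabola `α * x² / 2`. On `[0, n * h]`
each of the `n` cells of length `h` contributes the same value of `Z`, by invariance and
simplicity, so upper semicontinuity bounds `n` times the value of one cell by the value of `Z` at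
the parabola. The staircase `φ x = α * ⌊x⌋` has primitives that are affine on each cell, which
yields non-negativity; hence the value at the parabola is linear in the length of its domain. The
continuous `φ` with slope `s` on a proportion `l` of each period and slope `r` on the rest has
cells with `l` parts of the value for `s` and `1 - l` parts of the value for `r`, which yields
concavity.
-/

/-- The extension of the real-valued function `g` on `K` by `⊤` outside `K`, that is, `g + I_K`. -/
def extendTop {X : Type*} (K : Set X) (g : X → ℝ) : X → EReal :=
  fun x => (g x : EReal) + eIndicator K x

section ExtendTop

variable {X : Type*} {K L : Set X} {g f : X → ℝ}

lemma extendTop_of_mem {x : X} (hx : x ∈ K) : extendTop K g x = g x := by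
  simp only [extendTop, eIndicator, if_pos hx, add_zero]

lemma extendTop_of_notMem {x : X} (hx : x ∉ K) : extendTop K g x = ⊤ := by
  simp only [extendTop, eIndicator, if_neg hx, EReal.coe_add_top]

lemma extendTop_ne_bot (x : X) : extendTop K g x ≠ ⊥ := by
  by_cases hx : x ∈ K
  · simp [extendTop_of_mem hx]
  · simp [extendTop_of_notMem hx]

lemma edom_extendTop : edom (extendTop K g) = K := by
  ext x
  by_cases hx : x ∈ K
  · simpa [edom, extendTop_of_mem hx] using hx
  · simpa [edom, extendTop_of_notMem hx] using hx

lemma extendTop_congr (h : Set.EqOn g f K) : extendTop K g = extendTop K f := by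
  funext x
  by_cases hx : x ∈ K
  · rw [extendTop_of_mem hx, extendTop_of_mem hx, h hx]
  · rw [extendTop_of_notMem hx, extendTop_of_notMem hx]

lemma extendTop_union :
    extendTop (K ∪ L) g = fun x => min (extendTop K g x) (extendTop L g x) := by
  funext x
  by_cases hK : x ∈ K <;> by_cases hL : x ∈ L <;>
    simp [extendTop, eIndicator, hK, hL]

lemma extendTop_inter :
    extendTop (K ∩ L) g = fun x => max (extendTop K g x) (extendTop L g x) := by
  funext x
  by_cases hK : x ∈ K <;> by_cases hL : x ∈ L <;>
    simp [extendTop, eIndicator, hK, hL]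

lemma lowerSemicontinuous_extendTop [TopologicalSpace X] (hK : IsClosed K) (hg : ContinuousOn g K) :
    LowerSemicontinuous (extendTop K g) := by
  refine lowerSemicontinuous_iff_isClosed_preimage.2 fun y => ?_
  rcases eq_or_ne y ⊤ with rfl | hy
  · simp
  have sublevel : extendTop K g ⁻¹' Set.Iic y = K ∩ (fun x => (g x : EReal)) ⁻¹' Set.Iic y := by
    ext x
    by_cases hx : x ∈ K
    · simp [extendTop_of_mem hx, hx]
    · simp [extendTop_of_notMem hx, hx, hy]
  rw [sublevel]
  exact (continuous_coe_real_ereal.comp_continuousOn hg).preimage_isClosed_of_isClosed hK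
    isClosed_Iic

lemma lipBound_extendTop [NormedAddCommGroup X] {C : NNReal} (hg : LipschitzOnWith C g K) :
    LipBound (extendTop K g) C := by
  intro x hx y hy
  rw [edom_extendTop] at hx hy
  have hx := interior_subset hx
  have hy := interior_subset hy
  rw [extendTop_of_mem hx, extendTop_of_mem hy, EReal.toReal_coe, EReal.toReal_coe]
  exact hg.norm_sub_le hx hy

end ExtendTop

section LC

variable {K L : Set E} {g : E → ℝ}

lemma extendTop_convex (hg : ConvexOn ℝ K g) (x y : E) {t : ℝ} (ht₀ : 0 < t) (ht₁ : t < 1) :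
    extendTop K g (t • x + (1 - t) • y) ≤
      (t : EReal) * extendTop K g x + ((1 - t : ℝ) : EReal) * extendTop K g y := by
  have ht₁' : 0 < 1 - t := sub_pos.2 ht₁
  have mul_ne_bot {s : ℝ} (hs : 0 < s) (z : E) : (s : EReal) * extendTop K g z ≠ ⊥ := by
    by_cases hz : z ∈ K
    · rw [extendTop_of_mem hz, ← EReal.coe_mul]
      exact EReal.coe_ne_bot _
    · rw [extendTop_of_notMem hz, EReal.coe_mul_top_of_pos hs]
      exact top_ne_bot
  by_cases hx : x ∈ K
  · by_cases hy : y ∈ K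
    · rw [extendTop_of_mem hx, extendTop_of_mem hy,
        extendTop_of_mem (hg.1 hx hy ht₀.le ht₁'.le (add_sub_cancel _ _))]
      exact_mod_cast hg.2 hx hy ht₀.le ht₁'.le (add_sub_cancel _ _)
    · rw [extendTop_of_notMem hy, EReal.coe_mul_top_of_pos ht₁',
        EReal.add_top_of_ne_bot (mul_ne_bot ht₀ x)]
      exact le_top
  · rw [extendTop_of_notMem hx, EReal.coe_mul_top_of_pos ht₀,
      EReal.top_add_of_ne_bot (mul_ne_bot ht₁' y)]
    exact le_top

lemma isLC_extendTop (hK : IsCompact K) (hne : K.Nonempty) (hconv : ConvexOn ℝ K g)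
    {C : NNReal} (hlip : LipschitzOnWith C g K) : IsLC (extendTop K g) := by
  obtain ⟨x₀, hx₀⟩ := hne
  refine ⟨fun x y t => extendTop_convex hconv x y,
    lowerSemicontinuous_extendTop hK.isClosed hlip.continuousOn, extendTop_ne_bot, ⟨x₀, ?_⟩, ?_,
    (C + 1 : NNReal), by positivity, lipBound_extendTop (hlip.weaken le_self_add)⟩
  · rw [extendTop_of_mem hx₀]
    exact EReal.coe_ne_top _
  · rwa [edom_extendTop]

lemma tauConv_extendTop (hK : IsCompact K) (hne : K.Nonempty) {G : ℕ → E → ℝ}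
    (hconv : ∀ n, ConvexOn ℝ K (G n)) {C : NNReal} (hlip : ∀ n, LipschitzOnWith C (G n) K)
    (hg : IsLC (extendTop K g)) (hlim : ∀ x ∈ K, Tendsto (fun n => G n x) atTop (𝓝 (g x))) :
    TauConv (fun n => extendTop K (G n)) (extendTop K g) := by
  refine ⟨fun n => isLC_extendTop hK hne (hconv n) (hlip n), hg, fun x xs hxs => ?_,
    fun x => ⟨fun _ => x, tendsto_const_nhds, ?_⟩,
    (C + 1 : NNReal), by positivity, fun n => lipBound_extendTop ((hlip n).weaken le_self_add)⟩
  · by_cases hx : x ∈ K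
    · have lower_tendsto : Tendsto (fun n => G n x - C * ‖x - xs n‖) atTop (𝓝 (g x)) := by
        simpa using (hlim x hx).sub (((tendsto_const_nhds (x := x)).sub hxs).norm.const_mul (C : ℝ))
      have lower_le (n : ℕ) :
          ((G n x - C * ‖x - xs n‖ : ℝ) : EReal) ≤ extendTop K (G n) (xs n) := by
        by_cases hn : xs n ∈ K
        · rw [extendTop_of_mem hn, EReal.coe_le_coe_iff]
          linarith [le_abs_self (G n x - G n (xs n)), (hlip n).norm_sub_le hx hn,
            Real.norm_eq_abs (G n x - G n (xs n))]
        · rw [extendTop_of_notMem hn]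
          exact le_top
      rw [extendTop_of_mem hx,
        ← ((continuous_coe_real_ereal.tendsto _).comp lower_tendsto).liminf_eq]
      exact liminf_le_liminf (Eventually.of_forall lower_le)
    · have outside : ∀ᶠ n in atTop, ⊤ = extendTop K (G n) (xs n) := by
        filter_upwards [hxs.eventually (hK.isClosed.isOpen_compl.mem_nhds hx)] with n hn
        exact (extendTop_of_notMem hn).symm
      rw [((tendsto_const_nhds (x := (⊤ : EReal))).congr' outside).liminf_eq]
      exact le_top
  · by_cases hx : x ∈ K
    · simp only [extendTop_of_mem hx]
      exact (continuous_coe_real_ereal.tendsto _).comp (hlim x hx)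
    · simp only [extendTop_of_notMem hx]
      exact tendsto_const_nhds

lemma IsVal.extendTop_union_add_inter {Z : (E → EReal) → ℝ} (hZ : IsVal Z)
    (hK : IsLC (extendTop K g)) (hL : IsLC (extendTop L g)) (hKL : IsLC (extendTop (K ∪ L) g)) :
    Z (extendTop (K ∪ L) g) + Z (extendTop (K ∩ L) g) =
      Z (extendTop K g) + Z (extendTop L g) := by
  rw [extendTop_union] at hKL
  rw [extendTop_union, extendTop_inter, hZ _ _ hK hL hKL]

lemma DualTransInv.extendTop_add_affine {Z : (E → EReal) → ℝ} (hZ : DualTransInv Z)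
    (hg : IsLC (extendTop K g)) (l : E →ₗ[ℝ] ℝ) (c : ℝ) :
    Z (extendTop K fun x => g x + (l x + c)) = Z (extendTop K g) := by
  rw [← hZ _ hg l c]
  congr 1
  funext x
  rw [extendTop, extendTop, EReal.coe_add, add_right_comm]

end LC

section Integral

variable {φ ψ : ℝ → ℝ} {a b : ℝ}

lemma convexOn_integral_of_monotone (hφ : Monotone φ) (o : ℝ) :
    ConvexOn ℝ Set.univ fun x => ∫ y in o..x, φ y := by
  refine convexOn_of_slope_mono_adjacent convex_univ fun {x y z} _ _ hxy hyz => ?_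
  have hint (c d : ℝ) : IntervalIntegrable φ volume c d := hφ.intervalIntegrable
  rw [intervalIntegral.integral_interval_sub_left (hint _ _) (hint _ _),
    intervalIntegral.integral_interval_sub_left (hint _ _) (hint _ _)]
  calc (∫ u in x..y, φ u) / (y - x) ≤ φ y := by
        rw [div_le_iff₀ (sub_pos.2 hxy), mul_comm, ← smul_eq_mul,
          ← intervalIntegral.integral_const]
        exact intervalIntegral.integral_mono_on hxy.le (hint _ _) intervalIntegrable_const
          fun u hu => hφ hu.2
    _ ≤ (∫ u in y..z, φ u) / (z - y) := by
        rw [le_div_iff₀ (sub_pos.2 hyz), mul_comm, ← smul_eq_mul,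
          ← intervalIntegral.integral_const]
        exact intervalIntegral.integral_mono_on hyz.le intervalIntegrable_const (hint _ _)
          fun u hu => hφ hu.1

lemma lipschitzOnWith_integral_of_bound {C : NNReal}
    (hint : ∀ c d, IntervalIntegrable φ volume c d) (hC : ∀ x ∈ Set.Icc a b, |φ x| ≤ C) (o : ℝ) :
    LipschitzOnWith C (fun x => ∫ y in o..x, φ y) (Set.Icc a b) := by
  refine LipschitzOnWith.of_dist_le_mul fun x hx y hy => ?_
  rw [Real.dist_eq, Real.dist_eq, intervalIntegral.integral_interval_sub_left (hint _ _) (hint _ _)]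
  have norm_le (u) (hu : u ∈ Set.uIoc y x) : ‖φ u‖ ≤ C :=
    hC u (Set.uIcc_subset_Icc hy hx (Set.uIoc_subset_uIcc hu))
  exact intervalIntegral.norm_integral_le_of_norm_le_const norm_le

lemma isLC_extendTop_integral (hφ : Monotone φ) (hab : a ≤ b) (o : ℝ) :
    IsLC (extendTop (Set.Icc a b) fun x => ∫ y in o..x, φ y) := by
  have hbound (x) (hx : x ∈ Set.Icc a b) : |φ x| ≤ (max |φ a| |φ b|).toNNReal :=
    (abs_le_max_abs_abs (hφ hx.1) (hφ hx.2)).trans (Real.le_coe_toNNReal _)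
  exact isLC_extendTop isCompact_Icc (Set.nonempty_Icc.2 hab)
    ((convexOn_integral_of_monotone hφ o).subset (Set.subset_univ _) (convex_Icc a b))
    (lipschitzOnWith_integral_of_bound (fun _ _ => hφ.intervalIntegrable) hbound o)

/-- The extension by `⊤` of a function on `[a, b]` with derivative `φ`, normalized to vanish
at `a`. -/
def primitive (φ : ℝ → ℝ) (a b : ℝ) : ℝ → EReal :=
  extendTop (Set.Icc a b) fun x => ∫ y in a..x, φ y

lemma isLC_primitive (hφ : Monotone φ) (hab : a ≤ b) : IsLC (primitive φ a b) :=
  isLC_extendTop_integral hφ hab a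

lemma tauConv_primitive {Φ : ℕ → ℝ → ℝ} (hab : a ≤ b) (hΦ : ∀ n, Monotone (Φ n))
    (hlim : ∀ x, Tendsto (fun n => Φ n x) atTop (𝓝 (φ x))) :
    TauConv (fun n => primitive (Φ n) a b) (primitive φ a b) := by
  have hφ : Monotone φ := fun x y hxy =>
    le_of_tendsto_of_tendsto' (hlim x) (hlim y) fun n => hΦ n hxy
  obtain ⟨C, hC⟩ := ((hlim a).abs.max (hlim b).abs).bddAbove_range
  have bound (n : ℕ) (x : ℝ) (hx : x ∈ Set.Icc a b) : |Φ n x| ≤ C.toNNReal :=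
    (abs_le_max_abs_abs (hΦ n hx.1) (hΦ n hx.2)).trans
      ((hC (Set.mem_range_self n)).trans (Real.le_coe_toNNReal C))
  refine tauConv_extendTop isCompact_Icc (Set.nonempty_Icc.2 hab)
    (fun n => (convexOn_integral_of_monotone (hΦ n) a).subset (Set.subset_univ _) (convex_Icc a b))
    (fun n => lipschitzOnWith_integral_of_bound (fun _ _ => (hΦ n).intervalIntegrable) (bound n) a)
    (isLC_primitive hφ hab) fun x hx => ?_
  refine intervalIntegral.tendsto_integral_filter_of_dominated_convergence (fun _ => C.toNNReal)
    (Eventually.of_forall fun n => (hΦ n).measurable.aestronglyMeasurable)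
    (Eventually.of_forall fun n => Eventually.of_forall fun y hy => bound n y ?_)
    intervalIntegrable_const (Eventually.of_forall fun y _ => hlim y)
  exact Set.uIcc_subset_Icc (Set.left_mem_Icc.2 hab) hx (Set.uIoc_subset_uIcc hy)

lemma primitive_congr (h : Set.EqOn φ ψ (Set.Ioo a b)) : primitive φ a b = primitive ψ a b :=
  extendTop_congr fun _ hx => intervalIntegral.integral_congr_Ioo_of_le hx.1
    (h.mono (Set.Ioo_subset_Ioo_right hx.2))

lemma primitive_add_add (φ : ℝ → ℝ) (a b y : ℝ) :
    primitive φ (a + y) (b + y) = fun x => primitive (fun u => φ (u + y)) a b (x - y) := by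
  have integral_shift (x : ℝ) : ∫ u in a..x - y, φ (u + y) = ∫ u in a + y..x, φ u := by
    rw [intervalIntegral.integral_comp_add_right, sub_add_cancel]
  funext x
  by_cases hx : x - y ∈ Set.Icc a b
  · have hx' : x ∈ Set.Icc (a + y) (b + y) := by rwa [← Set.preimage_sub_const_Icc]
    rw [primitive, primitive, extendTop_of_mem hx, extendTop_of_mem hx', integral_shift]
  · have hx' : x ∉ Set.Icc (a + y) (b + y) := by rwa [← Set.preimage_sub_const_Icc]
    rw [primitive, primitive, extendTop_of_notMem hx, extendTop_of_notMem hx']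

end Integral

/-- A simple valuation that is invariant under translations and under the addition of affine
functions. -/
structure IsInvariantSimpleVal (Z : (ℝ → EReal) → ℝ) : Prop where
  isVal : IsVal Z
  transInv : TransInv Z
  dualTransInv : DualTransInv Z
  simple : ∀ u : ℝ → EReal, IsLC u → (∃ x : ℝ, edom u = {x}) → Z u = 0

namespace IsInvariantSimpleVal

variable {Z : (ℝ → EReal) → ℝ} {φ ψ : ℝ → ℝ} {a b c : ℝ}

lemma extendTop_integral (hZ : IsInvariantSimpleVal Z) (hφ : Monotone φ) (hab : a ≤ b) (o : ℝ) :
    Z (extendTop (Set.Icc a b) fun x => ∫ y in o..x, φ y) = Z (primitive φ a b) := by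
  rw [primitive, ← hZ.dualTransInv.extendTop_add_affine (isLC_primitive hφ hab) 0
    (∫ y in o..a, φ y)]
  congr 2
  funext x
  rw [LinearMap.zero_apply, zero_add, add_comm,
    intervalIntegral.integral_add_adjacent_intervals hφ.intervalIntegrable hφ.intervalIntegrable]

lemma primitive_add_const (hZ : IsInvariantSimpleVal Z) (hφ : Monotone φ) (hab : a ≤ b) (c : ℝ) :
    Z (primitive (fun x => φ x + c) a b) = Z (primitive φ a b) := by
  rw [primitive, primitive, ← hZ.dualTransInv.extendTop_add_affine
    (isLC_primitive hφ hab) (LinearMap.lsmul ℝ ℝ c) (-(c * a))]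
  congr 2
  funext x
  rw [intervalIntegral.integral_add hφ.intervalIntegrable intervalIntegrable_const,
    intervalIntegral.integral_const, LinearMap.lsmul_apply, smul_eq_mul, smul_eq_mul]
  ring

lemma primitive_shift (hZ : IsInvariantSimpleVal Z) (hφ : Monotone φ) (hab : a ≤ b) {y : ℝ}
    (h : ∀ x ∈ Set.Ioo a b, ψ (x + y) = φ x + c) :
    Z (primitive ψ (a + y) (b + y)) = Z (primitive φ a b) := by
  rw [primitive_add_add, primitive_congr h,
    hZ.transInv _ (isLC_primitive (hφ.add_const c) hab), hZ.primitive_add_const hφ hab]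

lemma primitive_self (hZ : IsInvariantSimpleVal Z) (hφ : Monotone φ) (a : ℝ) :
    Z (primitive φ a a) = 0 :=
  hZ.simple _ (isLC_primitive hφ le_rfl)
    ⟨a, by rw [primitive, edom_extendTop, Set.Icc_self]⟩

lemma primitive_add_adjacent (hZ : IsInvariantSimpleVal Z) (hφ : Monotone φ)
    (hab : a ≤ b) (hbc : b ≤ c) :
    Z (primitive φ a b) + Z (primitive φ b c) = Z (primitive φ a c) := by
  have union_add_inter := hZ.isVal.extendTop_union_add_inter
    (isLC_extendTop_integral hφ hab b) (isLC_extendTop_integral hφ hbc b)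
    (by rw [Set.Icc_union_Icc_eq_Icc hab hbc]
        exact isLC_extendTop_integral hφ (hab.trans hbc) b)
  rw [Set.Icc_union_Icc_eq_Icc hab hbc, Set.Icc_inter_Icc_eq_singleton hab hbc, ← Set.Icc_self,
    hZ.extendTop_integral hφ (hab.trans hbc), hZ.extendTop_integral hφ le_rfl,
    hZ.extendTop_integral hφ hab, hZ.extendTop_integral hφ hbc, hZ.primitive_self hφ,
    add_zero] at union_add_inter
  exact union_add_inter.symm

lemma primitive_periodic (hZ : IsInvariantSimpleVal Z) (hφ : Monotone φ) {α h : ℝ} (hh : 0 ≤ h)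
    (hper : Function.Periodic (fun x => φ x - α * x) h) (n : ℕ) :
    Z (primitive φ 0 (n * h)) = n * Z (primitive φ 0 h) := by
  induction n with
  | zero => simpa using hZ.primitive_self hφ 0
  | succ n ih =>
    have hnh : 0 ≤ n * h := by positivity
    have last_cell : Z (primitive φ (0 + n * h) (h + n * h)) = Z (primitive φ 0 h) := by
      refine hZ.primitive_shift hφ hh (c := α * (n * h)) fun x _ => ?_
      linear_combination hper.nat_mul n x
    rw [zero_add, add_comm] at last_cell
    rw [Nat.cast_succ, add_one_mul, ← hZ.primitive_add_adjacent hφ hnh (by linarith), ih,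
      last_cell, add_one_mul]

end IsInvariantSimpleVal

section Rescale

variable {φ : ℝ → ℝ} {α h : ℝ}

/-- The function whose graph is the graph of `φ` scaled by the factor `h`. -/
def rescale (φ : ℝ → ℝ) (h : ℝ) : ℝ → ℝ := fun x => h * φ (x / h)

lemma monotone_rescale (hφ : Monotone φ) (hh : 0 ≤ h) : Monotone (rescale φ h) :=
  fun _ _ hxy => mul_le_mul_of_nonneg_left (hφ (div_le_div_of_nonneg_right hxy hh)) hh

lemma periodic_rescale_sub (hper : Function.Periodic (fun x => φ x - α * x) 1) (hh : h ≠ 0) :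
    Function.Periodic (fun x => rescale φ h x - α * x) h := by
  intro x
  have hx := hper (x / h)
  simp only [rescale, add_div, div_self hh]
  linear_combination h * hx

lemma exists_abs_sub_le_of_periodic (hφ : Monotone φ)
    (hper : Function.Periodic (fun x => φ x - α * x) 1) : ∃ C, ∀ x, |φ x - α * x| ≤ C := by
  refine ⟨max |φ 0| |φ 1| + |α|, fun x => ?_⟩
  obtain ⟨y, ⟨hy₀, hy₁⟩, hxy⟩ := hper.exists_mem_Ico₀ one_pos x
  rw [hxy]
  have hαy : |α * y| ≤ |α| := by
    rw [abs_mul, abs_of_nonneg hy₀]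
    exact mul_le_of_le_one_right (abs_nonneg α) hy₁.le
  exact (abs_sub _ _).trans (add_le_add (abs_le_max_abs_abs (hφ hy₀) (hφ hy₁.le)) hαy)

lemma tendsto_rescale (hφ : Monotone φ) (hper : Function.Periodic (fun x => φ x - α * x) 1)
    (x : ℝ) : Tendsto (fun h => rescale φ h x) (𝓝[>] 0) (𝓝 (α * x)) := by
  obtain ⟨C, hC⟩ := exists_abs_sub_le_of_periodic hφ hper
  have error_le : ∀ᶠ h in 𝓝[>] (0 : ℝ), ‖rescale φ h x - α * x‖ ≤ h * C := by
    filter_upwards [self_mem_nhdsWithin] with h (hh : 0 < h)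
    calc ‖rescale φ h x - α * x‖ = h * |φ (x / h) - α * (x / h)| := by
          rw [Real.norm_eq_abs, ← abs_of_pos hh, ← abs_mul, abs_of_pos hh, rescale]
          congr 1
          field_simp
      _ ≤ h * C := mul_le_mul_of_nonneg_left (hC _) hh.le
  rw [tendsto_iff_norm_sub_tendsto_zero]
  refine squeeze_zero' (Eventually.of_forall fun _ => norm_nonneg _) error_le ?_
  have scale_tendsto : Tendsto (fun h : ℝ => h) (𝓝[>] 0) (𝓝 0) :=
    tendsto_nhdsWithin_of_tendsto_nhds tendsto_id
  simpa using scale_tendsto.mul_const C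

end Rescale

lemma map_mul_of_additive_of_nonneg {f : ℝ → ℝ}
    (hadd : ∀ s t, 0 ≤ s → 0 ≤ t → f (s + t) = f s + f t) (hnonneg : ∀ t, 0 ≤ t → 0 ≤ f t)
    {l t : ℝ} (hl : 0 ≤ l) (ht : 0 ≤ t) : f (l * t) = l * f t := by
  have map_nat_mul (n : ℕ) {s : ℝ} (hs : 0 ≤ s) : f (n * s) = n * f s := by
    induction n with
    | zero => simpa using hadd 0 0 le_rfl le_rfl
    | succ n ih => rw [Nat.cast_succ, add_one_mul, hadd _ _ (by positivity) hs, ih, add_one_mul]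
  have mono {s u : ℝ} (hs : 0 ≤ s) (hsu : s ≤ u) : f s ≤ f u := by
    have := hadd s (u - s) hs (sub_nonneg.2 hsu)
    rw [add_sub_cancel] at this
    linarith [hnonneg (u - s) (sub_nonneg.2 hsu)]
  refine le_antisymm ?_ ?_
  · refine ge_of_tendsto (((tendsto_nat_ceil_mul_div_atTop hl).comp
      tendsto_natCast_atTop_atTop).mul_const (f t)) ?_
    filter_upwards [eventually_gt_atTop 0] with n hn
    have hn : (0 : ℝ) < n := Nat.cast_pos.2 hn
    rw [Function.comp_apply, div_mul_eq_mul_div, le_div_iff₀ hn, mul_comm,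
      ← map_nat_mul n (mul_nonneg hl ht), ← map_nat_mul _ ht, ← mul_assoc, mul_comm (n : ℝ)]
    exact mono (by positivity) (mul_le_mul_of_nonneg_right (Nat.le_ceil _) ht)
  · refine le_of_tendsto (((tendsto_nat_floor_mul_div_atTop hl).comp
      tendsto_natCast_atTop_atTop).mul_const (f t)) ?_
    filter_upwards [eventually_gt_atTop 0] with n hn
    have hn : (0 : ℝ) < n := Nat.cast_pos.2 hn
    rw [Function.comp_apply, div_mul_eq_mul_div, div_le_iff₀ hn, mul_comm (f (l * t)),
      ← map_nat_mul n (mul_nonneg hl ht), ← map_nat_mul _ ht, ← mul_assoc, mul_comm (n : ℝ)]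
    exact mono (by positivity)
      (mul_le_mul_of_nonneg_right (Nat.floor_le (by positivity)) ht)

/-- The value of `Z` at `x ↦ α * x² / 2` restricted to `[0, t]`. -/
def quadValue (Z : (ℝ → EReal) → ℝ) (α t : ℝ) : ℝ := Z (primitive (fun x => α * x) 0 t)

lemma quadValue_zero_left {Z : (ℝ → EReal) → ℝ}
    (hvanish : ∀ a b : ℝ, a ≤ b → Z (eIndicator (Set.Icc a b)) = 0) {t : ℝ} (ht : 0 ≤ t) :
    quadValue Z 0 t = 0 := by
  have primitive_zero : primitive (fun x => 0 * x) 0 t = eIndicator (Set.Icc 0 t) := by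
    funext x
    simp [primitive, extendTop]
  rw [quadValue, primitive_zero, hvanish 0 t ht]

namespace IsInvariantSimpleVal

variable {Z : (ℝ → EReal) → ℝ} {φ : ℝ → ℝ} {α a b s t : ℝ}

lemma primitive_eq_quadValue (hZ : IsInvariantSimpleVal Z) (hα : 0 ≤ α) (hab : a ≤ b) {c : ℝ}
    (h : ∀ x ∈ Set.Ioo a b, φ x = α * x + c) :
    Z (primitive φ a b) = quadValue Z α (b - a) := by
  rw [quadValue, ← hZ.primitive_shift (ψ := φ) (y := a) (c := α * a + c)
    (monotone_mul_left_of_nonneg hα) (sub_nonneg.2 hab), zero_add, sub_add_cancel]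
  intro x hx
  rw [h (x + a) ⟨by linarith [hx.1], by linarith [hx.2]⟩]
  ring

lemma quadValue_add (hZ : IsInvariantSimpleVal Z) (hα : 0 ≤ α) (hs : 0 ≤ s) (ht : 0 ≤ t) :
    quadValue Z α (s + t) = quadValue Z α s + quadValue Z α t := by
  have right_half : Z (primitive (fun x => α * x) s (s + t)) = quadValue Z α t := by
    rw [hZ.primitive_eq_quadValue hα (by linarith) (c := 0) (by simp), add_sub_cancel_left]
  rw [← right_half, quadValue, quadValue,
    hZ.primitive_add_adjacent (monotone_mul_left_of_nonneg hα) hs (by linarith)]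

lemma le_quadValue_of_periodic (hZ : IsInvariantSimpleVal Z) (husc : TauUSC Z) (hφ : Monotone φ)
    (hper : Function.Periodic (fun x => φ x - α * x) 1) (ht : 0 < t) {c : ℝ}
    (hcell : ∀ h, 0 < h → h * c = t * Z (primitive (rescale φ h) 0 h)) :
    c ≤ quadValue Z α t := by
  have ht' (n : ℕ) : 0 < t / (n + 1) := by positivity
  have scale_tendsto : Tendsto (fun n : ℕ => t / ((n : ℝ) + 1)) atTop (𝓝[>] 0) :=
    tendsto_nhdsWithin_iff.2 ⟨tendsto_const_nhds.div_atTop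
      (tendsto_natCast_atTop_atTop.atTop_add tendsto_const_nhds), Eventually.of_forall ht'⟩
  have value (n : ℕ) : Z (primitive (rescale φ (t / (n + 1))) 0 t) = c := by
    have cells := hZ.primitive_periodic (monotone_rescale hφ (ht' n).le) (ht' n).le
      (periodic_rescale_sub hper (ht' n).ne') (n + 1)
    rw [Nat.cast_add_one, mul_div_cancel₀ t (by positivity)] at cells
    have cell_value := hcell _ (ht' n)
    rw [cells]
    field_simp at cell_value
    linarith
  have limsup_le := husc _ _ (tauConv_primitive ht.le
    (fun n => monotone_rescale hφ (ht' n).le)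
    fun x => (tendsto_rescale hφ hper x).comp scale_tendsto)
  simp only [value, limsup_const] at limsup_le
  exact limsup_le

lemma quadValue_nonneg (hZ : IsInvariantSimpleVal Z) (husc : TauUSC Z)
    (hvanish : ∀ a b : ℝ, a ≤ b → Z (eIndicator (Set.Icc a b)) = 0) (hα : 0 ≤ α) (ht : 0 ≤ t) :
    0 ≤ quadValue Z α t := by
  rcases ht.eq_or_lt with rfl | ht
  · exact (hZ.primitive_self (monotone_mul_left_of_nonneg hα) 0).ge
  have staircase_monotone : Monotone fun x : ℝ => α * (⌊x⌋ : ℝ) :=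
    (Int.cast_mono.comp Int.floor_mono).const_mul hα
  refine hZ.le_quadValue_of_periodic husc staircase_monotone (fun x => ?_) ht fun h hh => ?_
  · simp only [Int.floor_add_one, Int.cast_add, Int.cast_one]
    ring
  · rw [hZ.primitive_eq_quadValue le_rfl hh.le (c := 0), quadValue_zero_left hvanish (by linarith)]
    · simp
    · intro x hx
      have : ⌊x / h⌋ = 0 := Int.floor_eq_zero_iff.2
        ⟨div_nonneg hx.1.le hh.le, (div_lt_one hh).2 hx.2⟩
      simp [rescale, this]

lemma quadValue_mul (hZ : IsInvariantSimpleVal Z) (husc : TauUSC Z)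
    (hvanish : ∀ a b : ℝ, a ≤ b → Z (eIndicator (Set.Icc a b)) = 0) (hα : 0 ≤ α) {l : ℝ}
    (hl : 0 ≤ l) (ht : 0 ≤ t) : quadValue Z α (l * t) = l * quadValue Z α t :=
  map_mul_of_additive_of_nonneg (fun _ _ => hZ.quadValue_add hα)
    (fun _ => hZ.quadValue_nonneg husc hvanish hα) hl ht

end IsInvariantSimpleVal

section RampStair

variable {l : ℝ}

/-- The continuous function with slope `1` on each `[k, k + l]` and slope `0` on each
`[k + l, k + 1]`, where `k` is an integer and `0 ≤ l ≤ 1`. -/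
def rampStair (l x : ℝ) : ℝ := l * ⌊x⌋ + min (Int.fract x) l

lemma rampStair_add_one (l x : ℝ) : rampStair l (x + 1) = rampStair l x + l := by
  simp only [rampStair, Int.floor_add_one, Int.fract_add_one, Int.cast_add, Int.cast_one]
  ring

lemma rampStair_of_mem_Ico {x : ℝ} (hx : x ∈ Set.Ico 0 1) : rampStair l x = min x l := by
  simp only [rampStair, Int.floor_eq_zero_iff.2 hx, Int.fract_eq_self.2 hx, Int.cast_zero, mul_zero,
    zero_add]

lemma monotone_rampStair (hl : 0 ≤ l) : Monotone (rampStair l) := by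
  intro x y hxy
  rcases (Int.floor_mono hxy).eq_or_lt with hfloor | hfloor
  · simp only [rampStair, hfloor, Int.fract]
    gcongr
  · have hfloor : (⌊x⌋ : ℝ) + 1 ≤ ⌊y⌋ := by exact_mod_cast hfloor
    calc rampStair l x ≤ l * (⌊x⌋ + 1) := by
          rw [mul_add_one]
          exact add_le_add_right (min_le_right _ _) _
      _ ≤ l * ⌊y⌋ := mul_le_mul_of_nonneg_left hfloor hl
      _ ≤ rampStair l y := le_add_of_nonneg_right (le_min (Int.fract_nonneg y) hl)

lemma monotone_add_rampStair {r s : ℝ} (hr : 0 ≤ r) (hrs : r ≤ s) (hl : 0 ≤ l) :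
    Monotone fun x => r * x + (s - r) * rampStair l x :=
  (monotone_mul_left_of_nonneg hr).add ((monotone_rampStair hl).const_mul (sub_nonneg.2 hrs))

end RampStair

namespace IsInvariantSimpleVal

variable {Z : (ℝ → EReal) → ℝ} {r s l t : ℝ}

lemma primitive_rescale_rampStair (hZ : IsInvariantSimpleVal Z) {h : ℝ} (hh : 0 < h)
    (hr : 0 ≤ r) (hrs : r ≤ s) (hl₀ : 0 ≤ l) (hl₁ : l ≤ 1) :
    Z (primitive (rescale (fun x => r * x + (s - r) * rampStair l x) h) 0 h) =
      quadValue Z s (l * h) + quadValue Z r ((1 - l) * h) := by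
  have hlh₀ : 0 ≤ l * h := by positivity
  have hlh₁ : l * h ≤ h := mul_le_of_le_one_left hh.le hl₁
  have rescale_eq {x : ℝ} (hx₀ : 0 < x) (hx₁ : x < h) :
      rescale (fun x => r * x + (s - r) * rampStair l x) h x =
        r * x + (s - r) * min x (l * h) := by
    rw [rescale, rampStair_of_mem_Ico ⟨by positivity, (div_lt_one hh).2 hx₁⟩, mul_add,
      mul_left_comm h (s - r), mul_min_of_nonneg _ _ hh.le, mul_div_cancel₀ x hh.ne', mul_comm h l]
    field_simp
  have hmono := monotone_rescale (monotone_add_rampStair hr hrs hl₀) hh.le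
  rw [← hZ.primitive_add_adjacent hmono hlh₀ hlh₁,
    hZ.primitive_eq_quadValue (hr.trans hrs) hlh₀ (c := 0),
    hZ.primitive_eq_quadValue hr hlh₁ (c := (s - r) * (l * h)), sub_zero, one_sub_mul]
  · intro x hx
    rw [rescale_eq (hlh₀.trans_lt hx.1) hx.2, min_eq_right hx.1.le]
  · intro x hx
    rw [rescale_eq hx.1 (hx.2.trans_le hlh₁), min_eq_left hx.2.le]
    ring

lemma concaveOn_quadValue (hZ : IsInvariantSimpleVal Z) (husc : TauUSC Z)
    (hvanish : ∀ a b : ℝ, a ≤ b → Z (eIndicator (Set.Icc a b)) = 0) (ht : 0 < t) :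
    ConcaveOn ℝ (Set.Ici 0) fun α => quadValue Z α t := by
  refine LinearOrder.concaveOn_of_lt (convex_Ici 0) fun r hr s hs hrs a l ha hl hal => ?_
  rw [Set.mem_Ici] at hr hs
  obtain rfl : a = 1 - l := eq_sub_of_add_eq hal
  simp only [smul_eq_mul]
  refine hZ.le_quadValue_of_periodic husc (monotone_add_rampStair hr hrs.le hl.le)
    (fun x => ?_) ht fun h hh => ?_
  · simp only [rampStair_add_one]
    ring
  · have homogeneous {α c : ℝ} (hα : 0 ≤ α) (hc : 0 ≤ c) :
        t * quadValue Z α (c * h) = h * (c * quadValue Z α t) :=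
      calc t * quadValue Z α (c * h) = quadValue Z α (t * (c * h)) :=
            (hZ.quadValue_mul husc hvanish hα ht.le (mul_nonneg hc hh.le)).symm
        _ = quadValue Z α (h * c * t) := by congr 1; ring
        _ = h * (c * quadValue Z α t) := by
            rw [hZ.quadValue_mul husc hvanish hα (mul_nonneg hh.le hc) ht.le, mul_assoc]
    rw [hZ.primitive_rescale_rampStair hh hr hrs.le hl.le (by linarith), mul_add t,
      homogeneous hs hl.le, homogeneous hr ha.le]
    ring

lemma zetaOf_eq_quadValue (hZ : IsInvariantSimpleVal Z) {a m : ℝ} (ha : 0 ≤ a) (hm : 0 ≤ m) :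
    zetaOf Z m a = quadValue Z a (2 * m) / (2 * m) := by
  have integral_linear (x : ℝ) : ∫ y in (0 : ℝ)..x, a * y = a * (x ^ 2 / 2) := by
    rw [intervalIntegral.integral_const_mul, integral_id]
    ring
  have hmm : -m ≤ m := by linarith
  have value := hZ.extendTop_integral (monotone_mul_left_of_nonneg ha) hmm 0
  rw [hZ.primitive_eq_quadValue ha hmm (c := 0) (by simp), sub_neg_eq_add, ← two_mul] at value
  simp only [integral_linear] at value
  rw [← value]
  rfl

end IsInvariantSimpleVal

/-- For a simple, τ-upper semicontinuous, translation and dually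
epi-translation invariant valuation `Z` on `LC(ℝ)` vanishing on indicators of closed intervals,
the function `ζ(a) = Z(a·q + I_{[-m,m]})/(2m)` is non-negative and concave:
`ζ(λs + (1−λ)r) ≥ λζ(s) + (1−λ)ζ(r)` for all `0 ≤ r < s` and `λ ∈ (0,1)`. -/
theorem stmt12 (Z : (ℝ → EReal) → ℝ)
    (hval : IsVal Z) (husc : TauUSC Z) (htrans : TransInv Z) (hdual : DualTransInv Z)
    (hsimple : ∀ u : ℝ → EReal, IsLC u → (∃ x : ℝ, edom u = {x}) → Z u = 0)
    (hvanish : ∀ a b : ℝ, a ≤ b → Z (eIndicator (Set.Icc a b)) = 0)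
    (m : ℝ) (hm : 0 < m) :
    (∀ a : ℝ, 0 < a → 0 ≤ zetaOf Z m a) ∧
    (∀ r s l : ℝ, 0 ≤ r → r < s → 0 < l → l < 1 →
      l * zetaOf Z m s + (1 - l) * zetaOf Z m r ≤ zetaOf Z m (l * s + (1 - l) * r)) := by
  have hZ : IsInvariantSimpleVal Z := ⟨hval, htrans, hdual, hsimple⟩
  have hζ {a : ℝ} (ha : 0 ≤ a) := hZ.zetaOf_eq_quadValue ha hm.le
  refine ⟨fun a ha => ?_, fun r s l hr hrs hl₀ hl₁ => ?_⟩
  · rw [hζ ha.le]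
    exact div_nonneg (hZ.quadValue_nonneg husc hvanish ha.le (by positivity)) (by positivity)
  · have hs : 0 ≤ s := hr.trans hrs.le
    have hl : 0 ≤ 1 - l := sub_nonneg.2 hl₁.le
    rw [hζ hs, hζ hr, hζ (by positivity), ← mul_div_assoc, ← mul_div_assoc, ← add_div]
    have concave := hZ.concaveOn_quadValue husc hvanish (mul_pos two_pos hm)
    exact div_le_div_of_nonneg_right
      (concave.2 (Set.mem_Ici.2 hs) (Set.mem_Ici.2 hr) hl₀.le hl (add_sub_cancel l 1))
      (by positivity)

end
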